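/- arXiv:2303.13964 — 4 statements merged into one kernel-verified Lean document; each statement's English description precedes it below -/
import Mathlib

section
/- Fix a differentiable nonlinearity φ, a differentiable loss ℓ, labels (Y_obs)_u for u in a set V_tr of nodes, and define the inner objective F_in(W,A) = (1/|V_tr|) Σ_{u∈V_tr} ℓ((Y_W(X,A))_u, (Y_obs)_u), where Y_W(X,A) is the output of a k-layer GCN with parameters W. Define iterates W_0(A) = W_0 (an initialization independent of A) and W_{t+1}(A) = W_t(A) − Q_t(W_t(A), ∇_W F_in(W_t(A), A)) for arbitrary functions Q_t. Let G be a graph on the n nodes, let A and A' both be supported on G, agreeing on every entry except possibly the entry (i,j), where nodes i and j both satisfy dist_G(i,v) ≥ k and dist_G(j,v) ≥ k for every v ∈ V_tr. Then for every t ∈ ℕ, W_t(A) = W_t(A'); in particular the derivative of W_t(A) with respect to the entry A_{ij} is zero. -/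
/-!
STATEMENT 1: gradient-based inner iterates `W_t(A)` of the GCN training objective
`F_in` do not depend on the entry `A i j` when `i` and `j` are at least `k` hops
from every labelled node in `V_tr`.
-/

open scoped BigOperators

attribute [local instance] Matrix.normedAddCommGroup Matrix.normedSpace

/-- The output `X^[k]` of the first `k` layers of a message-passing GCN:
`X^[0] = X`, `X^[l+1] = φ (X^[l] * W1 l + A * X^[l] * W2 l + 1ₙ (b l)ᵀ)`. -/
noncomputable def gcnForward {n : ℕ} (φ : ℝ → ℝ) (d : ℕ → ℕ)
    (W1 W2 : ∀ l : ℕ, Matrix (Fin (d l)) (Fin (d (l + 1))) ℝ)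
    (b : ∀ l : ℕ, Fin (d (l + 1)) → ℝ)
    (A : Matrix (Fin n) (Fin n) ℝ) (X : Matrix (Fin n) (Fin (d 0)) ℝ) :
    ∀ k : ℕ, Matrix (Fin n) (Fin (d k)) ℝ
  | 0 => X
  | (k + 1) => Matrix.of fun u c =>
      φ ((gcnForward φ d W1 W2 b A X k * W1 k) u c
        + (A * gcnForward φ d W1 W2 b A X k * W2 k) u c + b k c)

/-- The parameters `W = {W1^[l], W2^[l], b^[l]}_{l=1}^k` of a `k`-layer GCN,
regarded as a point of a finite-dimensional real normed vector space. -/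
abbrev GCNParams (d : ℕ → ℕ) (k : ℕ) : Type :=
  ∀ l : Fin k,
    Matrix (Fin (d l)) (Fin (d (l + 1))) ℝ ×
      Matrix (Fin (d l)) (Fin (d (l + 1))) ℝ × (Fin (d (l + 1)) → ℝ)

/-- First weight matrices, extended by junk above layer `k`. -/
noncomputable def pW1 {d : ℕ → ℕ} {k : ℕ} (W : GCNParams d k) :
    ∀ l : ℕ, Matrix (Fin (d l)) (Fin (d (l + 1))) ℝ :=
  fun l => if h : l < k then (W ⟨l, h⟩).1 else 0

/-- Second weight matrices, extended by junk above layer `k`. -/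
noncomputable def pW2 {d : ℕ → ℕ} {k : ℕ} (W : GCNParams d k) :
    ∀ l : ℕ, Matrix (Fin (d l)) (Fin (d (l + 1))) ℝ :=
  fun l => if h : l < k then (W ⟨l, h⟩).2.1 else 0

/-- Biases, extended by junk above layer `k`. -/
noncomputable def pB {d : ℕ → ℕ} {k : ℕ} (W : GCNParams d k) :
    ∀ l : ℕ, Fin (d (l + 1)) → ℝ :=
  fun l => if h : l < k then (W ⟨l, h⟩).2.2 else 0

/-- The inner objective
`F_in (W, A) = (1/|V_tr|) ∑_{u ∈ V_tr} ℓ ((Y_W (X, A))_u, (Y_obs)_u)`. -/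
noncomputable def Finner {n : ℕ} (φ : ℝ → ℝ) (d : ℕ → ℕ) (k : ℕ)
    (ℓ : (Fin (d k) → ℝ) → ℝ → ℝ) (X : Matrix (Fin n) (Fin (d 0)) ℝ)
    (Yobs : Fin n → ℝ) (Vtr : Finset (Fin n))
    (W : GCNParams d k) (A : Matrix (Fin n) (Fin n) ℝ) : ℝ :=
  (Vtr.card : ℝ)⁻¹ *
    ∑ u ∈ Vtr, ℓ (fun c => gcnForward φ d (pW1 W) (pW2 W) (pB W) A X k u c) (Yobs u)

/-!
After `l` layers the features at a node `u` involve only the rows of the adjacency matrix at nodes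
within distance less than `l` of `u`: each layer reads one row, supported on the closed
neighbourhood, and so looks one step further. Changing rows at nodes at least `k` hops away from
`Vtr` therefore leaves the inner objective unchanged as a function of all the parameters, and an
optimiser that sees the graph only through this function cannot notice the change. Varying the entry
`(i, j)` changes row `i` alone, so the iterates are constant in that entry.
-/

/-- A matrix indexed by the vertices of `G` is supported on `G` if its nonzero off-diagonal entries
all lie at edges. The diagonal is unrestricted, so self-loops are allowed. -/
def IsSupportedOn {V R : Type*} [Zero R] (A : Matrix V V R) (G : SimpleGraph V) : Prop :=
  ∀ s t, s ≠ t → ¬ G.Adj s t → A s t = 0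

theorem IsSupportedOn.mul_row_congr {V ι R : Type*} [Fintype V] [NonUnitalNonAssocSemiring R]
    {A : Matrix V V R} {G : SimpleGraph V} (hA : IsSupportedOn A G) {M N : Matrix V ι R} {u : V}
    (hself : M u = N u) (hnbr : ∀ w, G.Adj u w → M w = N w) :
    (A * M) u = (A * N) u := by
  funext c
  simp only [Matrix.mul_apply]
  refine Finset.sum_congr rfl fun w _ => ?_
  rcases eq_or_ne u w with rfl | huw
  · rw [hself]
  by_cases hadj : G.Adj u w
  · rw [hnbr w hadj]
  · rw [hA u w huw hadj, zero_mul, zero_mul]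

theorem edist_lt_succ_of_adj {V : Type*} {G : SimpleGraph V} {u v w : V} {l : ℕ}
    (huv : G.Adj u v) (hvw : G.edist v w < l) : G.edist u w < (l + 1 : ℕ) :=
  calc G.edist u w ≤ G.edist u v + G.edist v w := G.edist_triangle
    _ = G.edist v w + 1 := by rw [SimpleGraph.edist_eq_one_iff_adj.mpr huv, add_comm]
    _ < l + 1 := (ENat.add_lt_add_iff_right ENat.one_ne_top).mpr hvw
    _ = (l + 1 : ℕ) := (Nat.cast_succ l).symm

section Locality

variable {n : ℕ} {G : SimpleGraph (Fin n)} {A B : Matrix (Fin n) (Fin n) ℝ} (φ : ℝ → ℝ)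
  (d : ℕ → ℕ) (X : Matrix (Fin n) (Fin (d 0)) ℝ)

theorem gcnForward_succ_row_congr (W1 W2 : ∀ l : ℕ, Matrix (Fin (d l)) (Fin (d (l + 1))) ℝ)
    (b : ∀ l : ℕ, Fin (d (l + 1)) → ℝ) {l : ℕ} {u : Fin n}
    (hself : gcnForward φ d W1 W2 b A X l u = gcnForward φ d W1 W2 b B X l u)
    (hagg : (A * gcnForward φ d W1 W2 b A X l) u = (B * gcnForward φ d W1 W2 b B X l) u) :
    gcnForward φ d W1 W2 b A X (l + 1) u = gcnForward φ d W1 W2 b B X (l + 1) u := by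
  funext c
  simp only [gcnForward, Matrix.of_apply, Matrix.mul_apply_eq_vecMul _ (W1 l),
    Matrix.mul_apply_eq_vecMul _ (W2 l), hself, hagg]

theorem gcnForward_row_congr (hA : IsSupportedOn A G)
    (W1 W2 : ∀ l : ℕ, Matrix (Fin (d l)) (Fin (d (l + 1))) ℝ)
    (b : ∀ l : ℕ, Fin (d (l + 1)) → ℝ) (l : ℕ) {u : Fin n}
    (hAB : ∀ w, G.edist u w < l → A w = B w) :
    gcnForward φ d W1 W2 b A X l u = gcnForward φ d W1 W2 b B X l u := by
  induction l generalizing u with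
  | zero => rfl
  | succ l ih =>
    have hrow : A u = B u := hAB u (by simp)
    have hself : gcnForward φ d W1 W2 b A X l u = gcnForward φ d W1 W2 b B X l u :=
      ih fun w hw => hAB w (hw.trans (Nat.cast_lt.mpr l.lt_succ_self))
    have hnbr (v : Fin n) (huv : G.Adj u v) :
        gcnForward φ d W1 W2 b A X l v = gcnForward φ d W1 W2 b B X l v :=
      ih fun w hw => hAB w (edist_lt_succ_of_adj huv hw)
    refine gcnForward_succ_row_congr φ d X W1 W2 b hself ?_
    rw [hA.mul_row_congr hself hnbr, Matrix.mul_apply_eq_vecMul, Matrix.mul_apply_eq_vecMul, hrow]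

theorem Finner_congr_of_far_rows (hA : IsSupportedOn A G) (k : ℕ)
    (ℓ : (Fin (d k) → ℝ) → ℝ → ℝ) (Yobs : Fin n → ℝ) {Vtr : Finset (Fin n)} {S : Set (Fin n)}
    (hS : ∀ i ∈ S, ∀ v ∈ Vtr, (k : ℕ∞) ≤ G.edist i v) (hAB : ∀ s ∉ S, A s = B s)
    (W : GCNParams d k) :
    Finner φ d k ℓ X Yobs Vtr W A = Finner φ d k ℓ X Yobs Vtr W B := by
  have houtput (v : Fin n) (hv : v ∈ Vtr) :
      gcnForward φ d (pW1 W) (pW2 W) (pB W) A X k v =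
        gcnForward φ d (pW1 W) (pW2 W) (pB W) B X k v :=
    gcnForward_row_congr φ d X hA _ _ _ k fun w hw =>
      hAB w fun hwS => (hS w hwS v hv).not_gt (G.edist_comm ▸ hw)
  unfold Finner
  congr 1
  exact Finset.sum_congr rfl fun v hv => by rw [houtput v hv]

end Locality

theorem eq_of_recurrence {α : Type*} (step : ℕ → α → α) {x y : ℕ → α} (h0 : x 0 = y 0)
    (hx : ∀ t, x (t + 1) = step t (x t)) (hy : ∀ t, y (t + 1) = step t (y t)) (t : ℕ) :
    x t = y t := by
  induction t with
  | zero => exact h0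
  | succ t ih => rw [hx, hy, ih]

theorem gcn_inner_iterates_independent_of_far_edges_general
    {n : ℕ} (φ : ℝ → ℝ) (d : ℕ → ℕ) (k : ℕ)
    (ℓ : (Fin (d k) → ℝ) → ℝ → ℝ)
    (X : Matrix (Fin n) (Fin (d 0)) ℝ)
    (Yobs : Fin n → ℝ) (Vtr : Finset (Fin n))
    (G : SimpleGraph (Fin n))
    (A A' : Matrix (Fin n) (Fin n) ℝ)
    (hA : IsSupportedOn A G)
    (S : Set (Fin n))
    (hS : ∀ i ∈ S, ∀ v ∈ Vtr, (k : ℕ∞) ≤ G.edist i v)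
    (hagree : ∀ s ∉ S, A s = A' s)
    (step : ℕ → GCNParams d k → (GCNParams d k → ℝ) → GCNParams d k)
    (W0 : GCNParams d k)
    (Wseq : Matrix (Fin n) (Fin n) ℝ → ℕ → GCNParams d k)
    (hW0 : ∀ B, Wseq B 0 = W0)
    (hWstep : ∀ B t, Wseq B (t + 1) =
      step t (Wseq B t) (fun W => Finner φ d k ℓ X Yobs Vtr W B)) :
    (∀ t : ℕ, Wseq A t = Wseq A' t) ∧
    (∀ t : ℕ, ∀ i ∈ S, ∀ j,
      HasDerivAt (fun θ : ℝ =>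
          Wseq (Matrix.of fun s t' => if s = i ∧ t' = j then θ else A s t') t)
        0 (A i j)) := by
  have hiterates (B : Matrix (Fin n) (Fin n) ℝ) (hB : ∀ s ∉ S, A s = B s) (t : ℕ) :
      Wseq A t = Wseq B t := by
    have hobjective : (fun W => Finner φ d k ℓ X Yobs Vtr W A) =
        fun W => Finner φ d k ℓ X Yobs Vtr W B :=
      funext (Finner_congr_of_far_rows φ d X hA k ℓ Yobs hS hB)
    exact eq_of_recurrence (fun t W => step t W fun W => Finner φ d k ℓ X Yobs Vtr W B)
      ((hW0 A).trans (hW0 B).symm) (fun t => hobjective ▸ hWstep A t) (hWstep B) t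
  refine ⟨hiterates A' hagree, fun t i hi j => ?_⟩
  have hconst (θ : ℝ) :
      Wseq (Matrix.of fun s t' => if s = i ∧ t' = j then θ else A s t') t = Wseq A t := by
    refine (hiterates _ (fun s hs => funext fun t' => ?_) t).symm
    have hsi : s ≠ i := fun h => hs (h ▸ hi)
    simp only [Matrix.of_apply, hsi, false_and, if_false]
  simp only [hconst]
  exact hasDerivAt_const _ _

/-- Let `W_0` be an initialization independent of `A` and
`W_{t+1}(A) = W_t(A) - Q_t (W_t(A), ∇_W F_in (W_t(A), A))` be gradient-based
iterates (the gradient being recorded as the Fréchet derivative of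
`W ↦ F_in (W, A)`).  If `A, A'` are supported on `G`, agree except possibly at
the entry `(i,j)`, and `i, j` are at least `k` hops from every node of `V_tr`,
then `W_t(A) = W_t(A')` for all `t`; in particular the derivative of `W_t(A)`
with respect to the entry `A i j` is zero. -/
theorem gcn_inner_iterates_independent_of_far_edges
    {n : ℕ} (φ : ℝ → ℝ) (hφ : Differentiable ℝ φ) (d : ℕ → ℕ) (k : ℕ)
    (ℓ : (Fin (d k) → ℝ) → ℝ → ℝ)
    (hℓ : Differentiable ℝ fun p : (Fin (d k) → ℝ) × ℝ => ℓ p.1 p.2)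
    (X : Matrix (Fin n) (Fin (d 0)) ℝ)
    (Yobs : Fin n → ℝ) (Vtr : Finset (Fin n))
    (G : SimpleGraph (Fin n))
    (A A' : Matrix (Fin n) (Fin n) ℝ)
    (hA : ∀ s t, s ≠ t → ¬ G.Adj s t → A s t = 0)
    (hA' : ∀ s t, s ≠ t → ¬ G.Adj s t → A' s t = 0)
    (i j : Fin n)
    (hagree : ∀ s t, ¬ (s = i ∧ t = j) → A s t = A' s t)
    (hi : ∀ v ∈ Vtr, (k : ℕ∞) ≤ G.edist i v)
    (hj : ∀ v ∈ Vtr, (k : ℕ∞) ≤ G.edist j v)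
    (Q : ℕ → GCNParams d k → (GCNParams d k →L[ℝ] ℝ) → GCNParams d k)
    (W0 : GCNParams d k)
    (Wseq : Matrix (Fin n) (Fin n) ℝ → ℕ → GCNParams d k)
    (hW0 : ∀ B, Wseq B 0 = W0)
    (hWstep : ∀ B t, Wseq B (t + 1) =
      Wseq B t - Q t (Wseq B t)
        (fderiv ℝ (fun W => Finner φ d k ℓ X Yobs Vtr W B) (Wseq B t))) :
    (∀ t : ℕ, Wseq A t = Wseq A' t) ∧
    (∀ t : ℕ,
      deriv (fun θ : ℝ =>
          Wseq (Matrix.of fun s t' => if s = i ∧ t' = j then θ else A s t') t)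
        (A i j) = 0) := by
  have h := gcn_inner_iterates_independent_of_far_edges_general φ d k ℓ X Yobs Vtr G A A' hA {i}
    (by rintro _ rfl; exact hi) (fun s hs => funext fun t => hagree s t fun h => hs h.1)
    (fun t W F => W - Q t W (fderiv ℝ F W)) W0 Wseq hW0 hWstep
  exact ⟨h.1, fun t => (h.2 t i rfl j).deriv⟩
end

section
/- Assume G is connected and let Y_obs ∈ ℝ^n. Then the function Y ↦ (1/|V_tr|) Σ_{i∈V_tr} (Y_i − (Y_obs)_i)² + (λ/m) Yᵀ L Y on ℝ^n is strictly convex and attains its unique global minimum at Y(A) = B^{-1} S̃_in Y_obs, where B = S̃_in + λ L̃. -/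
/-! STATEMENT 8: the Laplacian-regularization objective
`Y ↦ (1/|V_tr|) ∑_{i ∈ V_tr} (Y_i - (Y_obs)_i)² + (λ/m) Yᵀ L Y` is strictly convex and
attains its unique global minimum at `Y(A) = B⁻¹ S̃_in Y_obs`. -/

open scoped BigOperators Matrix

/-- The (weighted) graph Laplacian `L = D - A` with degree matrix `D = diag (A 1ₙ)`. -/
noncomputable def lapMat {n : ℕ} (A : Matrix (Fin n) (Fin n) ℝ) :
    Matrix (Fin n) (Fin n) ℝ :=
  Matrix.diagonal (fun u => ∑ v, A u v) - A

/-- The diagonal 0/1 selection matrix of a set `V` of nodes. -/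
noncomputable def selMat {n : ℕ} (V : Finset (Fin n)) : Matrix (Fin n) (Fin n) ℝ :=
  Matrix.diagonal (fun u => if u ∈ V then 1 else 0)

/-- `S̃_in = S_in / |V_tr|`. -/
noncomputable def Stin {n : ℕ} (Vtr : Finset (Fin n)) : Matrix (Fin n) (Fin n) ℝ :=
  (Vtr.card : ℝ)⁻¹ • selMat Vtr

/-- `B = S̃_in + λ L̃` where `L̃ = L/m`. -/
noncomputable def Bmat {n : ℕ} (Vtr : Finset (Fin n)) (lam : ℝ) (m : ℕ)
    (A : Matrix (Fin n) (Fin n) ℝ) : Matrix (Fin n) (Fin n) ℝ :=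
  Stin Vtr + (lam / m) • lapMat A

/-- The Laplacian-regularization inner objective. -/
noncomputable def lapObj {n : ℕ} (Vtr : Finset (Fin n)) (lam : ℝ) (m : ℕ)
    (A : Matrix (Fin n) (Fin n) ℝ) (Yobs : Fin n → ℝ) (Y : Fin n → ℝ) : ℝ :=
  (Vtr.card : ℝ)⁻¹ * ∑ i ∈ Vtr, (Y i - Yobs i) ^ 2 +
    (lam / m) * (Y ⬝ᵥ (lapMat A).mulVec Y)

/-! Expanding the squares, the objective is `Y ⬝ B Y - 2 Y ⬝ S̃ Y_obs` up to a constant, and such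
a quadratic is strictly convex with unique minimizer `B⁻¹ S̃ Y_obs` once `B` is positive definite.
Both summands of `B` are positive semidefinite. The Laplacian form is `½ ∑ A_{uv} (x_u - x_v)²`, so
on a connected graph it vanishes only at constant vectors, while the form of `S̃` vanishes only at
vectors that are zero on the nonempty set `V_tr`; the only vector of both kinds is `0`. -/

open Matrix

section QuadraticForm

variable {ι R : Type*} [Fintype ι]

theorem dotProduct_mulVec_comm_of_isSymm [CommSemiring R] {M : Matrix ι ι R} (hM : M.IsSymm)
    (x y : ι → R) : x ⬝ᵥ M *ᵥ y = y ⬝ᵥ M *ᵥ x := by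
  simpa only [hM.eq] using dotProduct_transpose_mulVec M x y

theorem sub_dotProduct_mulVec_sub_of_isSymm [CommRing R] {M : Matrix ι ι R} (hM : M.IsSymm)
    (x y : ι → R) :
    (x - y) ⬝ᵥ M *ᵥ (x - y) = x ⬝ᵥ M *ᵥ x - 2 * (x ⬝ᵥ M *ᵥ y) + y ⬝ᵥ M *ᵥ y := by
  simp only [mulVec_sub, dotProduct_sub, sub_dotProduct, dotProduct_mulVec_comm_of_isSymm hM y x]
  ring

theorem convexComb_dotProduct_mulVec_convexComb [CommRing R] (M : Matrix ι ι R) (x y : ι → R)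
    {a b : R} (hab : a + b = 1) :
    (a • x + b • y) ⬝ᵥ M *ᵥ (a • x + b • y) =
      a * (x ⬝ᵥ M *ᵥ x) + b * (y ⬝ᵥ M *ᵥ y) - a * b * ((x - y) ⬝ᵥ M *ᵥ (x - y)) := by
  obtain rfl : b = 1 - a := eq_sub_of_add_eq' hab
  simp only [mulVec_add, mulVec_sub, mulVec_smul, dotProduct_add, add_dotProduct, dotProduct_sub,
    sub_dotProduct, dotProduct_smul, smul_dotProduct, smul_eq_mul]
  ring

theorem posDef_add_of_posSemidef {M N : Matrix ι ι ℝ} (hM : M.PosSemidef) (hN : N.PosSemidef)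
    (h : ∀ x, x ⬝ᵥ M *ᵥ x = 0 → x ⬝ᵥ N *ᵥ x = 0 → x = 0) : (M + N).PosDef := by
  refine .of_dotProduct_mulVec_pos (hM.isHermitian.add hN.isHermitian) fun x hx ↦ ?_
  have hMx : 0 ≤ x ⬝ᵥ M *ᵥ x := hM.dotProduct_mulVec_nonneg x
  have hNx : 0 ≤ x ⬝ᵥ N *ᵥ x := hN.dotProduct_mulVec_nonneg x
  rw [star_trivial, add_mulVec, dotProduct_add]
  refine (add_nonneg hMx hNx).lt_of_ne' fun h0 ↦ hx ?_
  obtain ⟨hM0, hN0⟩ := (add_eq_zero_iff_of_nonneg hMx hNx).1 h0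
  exact h x hM0 hN0

theorem sub_dotProduct_mulVec_sub_pos {M : Matrix ι ι ℝ} (hM : M.PosDef) {x y : ι → ℝ}
    (hxy : x ≠ y) : 0 < (x - y) ⬝ᵥ M *ᵥ (x - y) :=
  hM.dotProduct_mulVec_pos (sub_ne_zero.2 hxy)

theorem strictConvexOn_dotProduct_mulVec {M : Matrix ι ι ℝ} (hM : M.PosDef) :
    StrictConvexOn ℝ Set.univ fun x ↦ x ⬝ᵥ M *ᵥ x := by
  refine ⟨convex_univ, fun x _ y _ hxy a b ha hb hab ↦ ?_⟩
  simp only [convexComb_dotProduct_mulVec_convexComb M x y hab, smul_eq_mul]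
  exact sub_lt_self _ (mul_pos (mul_pos ha hb) (sub_dotProduct_mulVec_sub_pos hM hxy))

/-- The quadratic function `x ↦ x ⬝ M x - 2 x ⬝ b`, scaled so that for symmetric `M` its critical
points are the solutions of the normal equation `M x = b`. -/
def quadFun (M : Matrix ι ι ℝ) (b x : ι → ℝ) : ℝ :=
  x ⬝ᵥ M *ᵥ x - 2 * (x ⬝ᵥ b)

theorem strictConvexOn_quadFun {M : Matrix ι ι ℝ} (hM : M.PosDef) (b : ι → ℝ) :
    StrictConvexOn ℝ Set.univ (quadFun M b) := by
  have hlin : ConvexOn ℝ Set.univ fun x ↦ (-2 : ℝ) • (dotProductBilin ℝ ℝ).flip b x :=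
    LinearMap.convexOn ((-2 : ℝ) • (dotProductBilin ℝ ℝ).flip b) convex_univ
  refine ((strictConvexOn_dotProduct_mulVec hM).add_convexOn hlin).congr fun x _ ↦ ?_
  simp [quadFun, sub_eq_add_neg]

theorem quadFun_mulVec {M : Matrix ι ι ℝ} (hM : M.IsSymm) (x y : ι → ℝ) :
    quadFun M (M *ᵥ y) x = quadFun M (M *ᵥ y) y + (x - y) ⬝ᵥ M *ᵥ (x - y) := by
  rw [quadFun, quadFun, sub_dotProduct_mulVec_sub_of_isSymm hM]
  ring

theorem quadFun_inv_mulVec_lt [DecidableEq ι] {M : Matrix ι ι ℝ} (hM : M.PosDef) {b x : ι → ℝ}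
    (hx : x ≠ M⁻¹ *ᵥ b) : quadFun M b (M⁻¹ *ᵥ b) < quadFun M b x := by
  have hsymm : M.IsSymm := isHermitian_iff_isSymm.1 hM.isHermitian
  have hb : M *ᵥ (M⁻¹ *ᵥ b) = b := by
    rw [mulVec_mulVec, mul_nonsing_inv _ hM.det_pos.ne'.isUnit, one_mulVec]
  have hsq := quadFun_mulVec hsymm x (M⁻¹ *ᵥ b)
  rw [hb] at hsq
  exact hsq ▸ lt_add_of_pos_right _ (sub_dotProduct_mulVec_sub_pos hM hx)

end QuadraticForm

theorem eq_of_preconnected_of_forall_adj_eq {V α : Type*} {G : SimpleGraph V}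
    (hG : G.Preconnected) {f : V → α} (hf : ∀ u v, G.Adj u v → f u = f v) (u v : V) :
    f u = f v := by
  obtain ⟨p⟩ := hG u v
  induction p with
  | nil => rfl
  | cons huv _ ih => exact (hf _ _ huv).trans ih

section Laplacian

variable {n : ℕ} {A : Matrix (Fin n) (Fin n) ℝ}

theorem lapMat_mulVec_apply (A : Matrix (Fin n) (Fin n) ℝ) (x : Fin n → ℝ) (u : Fin n) :
    (lapMat A *ᵥ x) u = ∑ v, A u v * (x u - x v) := by
  rw [lapMat, sub_mulVec, Pi.sub_apply, mulVec_diagonal]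
  simp only [mulVec, dotProduct, mul_sub, Finset.sum_sub_distrib, Finset.sum_mul]

theorem dotProduct_lapMat_mulVec (hA : A.IsSymm) (x : Fin n → ℝ) :
    x ⬝ᵥ lapMat A *ᵥ x = (∑ u, ∑ v, A u v * (x u - x v) ^ 2) / 2 := by
  have hrow : x ⬝ᵥ lapMat A *ᵥ x = ∑ u, ∑ v, A u v * (x u * (x u - x v)) := by
    simp only [dotProduct, lapMat_mulVec_apply, Finset.mul_sum, mul_left_comm]
  have hcol : x ⬝ᵥ lapMat A *ᵥ x = ∑ u, ∑ v, A u v * (x v * (x v - x u)) := by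
    rw [hrow, Finset.sum_comm]
    simp only [hA.apply]
  have hadd : x ⬝ᵥ lapMat A *ᵥ x + x ⬝ᵥ lapMat A *ᵥ x = ∑ u, ∑ v, A u v * (x u - x v) ^ 2 := by
    nth_rewrite 1 [hrow]
    rw [hcol]
    simp only [← Finset.sum_add_distrib]
    congr! 2
    ring
  linarith

theorem isSymm_lapMat (hA : A.IsSymm) : (lapMat A).IsSymm :=
  (isSymm_diagonal _).sub hA

theorem posSemidef_lapMat (hA : A.IsSymm) (hA₀ : ∀ u v, 0 ≤ A u v) : (lapMat A).PosSemidef := by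
  refine .of_dotProduct_mulVec_nonneg (isHermitian_iff_isSymm.2 (isSymm_lapMat hA)) fun x ↦ ?_
  rw [star_trivial, dotProduct_lapMat_mulVec hA]
  have hsum : 0 ≤ ∑ u, ∑ v, A u v * (x u - x v) ^ 2 :=
    Finset.sum_nonneg fun u _ ↦ Finset.sum_nonneg fun v _ ↦ mul_nonneg (hA₀ u v) (sq_nonneg _)
  exact div_nonneg hsum zero_le_two

theorem dotProduct_lapMat_mulVec_eq_zero_iff (hA : A.IsSymm) (hA₀ : ∀ u v, 0 ≤ A u v)
    {x : Fin n → ℝ} : x ⬝ᵥ lapMat A *ᵥ x = 0 ↔ ∀ u v, A u v ≠ 0 → x u = x v := by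
  have hterm : ∀ u v, 0 ≤ A u v * (x u - x v) ^ 2 := fun u v ↦
    mul_nonneg (hA₀ u v) (sq_nonneg _)
  rw [dotProduct_lapMat_mulVec hA, div_eq_zero_iff, or_iff_left two_ne_zero,
    Finset.sum_eq_zero_iff_of_nonneg fun u _ ↦ Finset.sum_nonneg fun v _ ↦ hterm u v]
  simp only [Finset.sum_eq_zero_iff_of_nonneg fun v _ ↦ hterm _ v, Finset.mem_univ, true_imp_iff,
    mul_eq_zero, pow_eq_zero_iff two_ne_zero, sub_eq_zero, ne_eq, or_iff_not_imp_left]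

end Laplacian

section Objective

variable {n m : ℕ} {A : Matrix (Fin n) (Fin n) ℝ} {Vtr : Finset (Fin n)} {lam : ℝ}

theorem dotProduct_Stin_mulVec (Vtr : Finset (Fin n)) (x y : Fin n → ℝ) :
    x ⬝ᵥ Stin Vtr *ᵥ y = (Vtr.card : ℝ)⁻¹ * ∑ i ∈ Vtr, x i * y i := by
  simp [Stin, selMat, smul_mulVec, dotProduct, mulVec_diagonal, Finset.mul_sum, mul_left_comm]

theorem posSemidef_Stin (Vtr : Finset (Fin n)) : (Stin Vtr).PosSemidef := by
  refine PosSemidef.smul (.diagonal fun i ↦ ?_) (by positivity)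
  positivity

theorem eq_zero_of_dotProduct_Stin_mulVec_eq_zero {x : Fin n → ℝ}
    (hx : x ⬝ᵥ Stin Vtr *ᵥ x = 0) {i : Fin n} (hi : i ∈ Vtr) : x i = 0 := by
  have hcard : (Vtr.card : ℝ)⁻¹ ≠ 0 :=
    inv_ne_zero (Nat.cast_ne_zero.2 (Finset.card_ne_zero_of_mem hi))
  rw [dotProduct_Stin_mulVec, mul_eq_zero, or_iff_right hcard,
    Finset.sum_eq_zero_iff_of_nonneg fun i _ ↦ mul_self_nonneg (x i)] at hx
  exact mul_self_eq_zero.1 (hx i hi)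

theorem posDef_Bmat {G : SimpleGraph (Fin n)} (hG : G.Preconnected) (hA : A.IsSymm)
    (hA₀ : ∀ u v, 0 ≤ A u v) (hadj : ∀ u v, G.Adj u v → A u v ≠ 0) (hVtr : Vtr.Nonempty)
    (hcoef : 0 < lam / m) : (Bmat Vtr lam m A).PosDef := by
  refine posDef_add_of_posSemidef (posSemidef_Stin Vtr)
    ((posSemidef_lapMat hA hA₀).smul hcoef.le) fun x hS hL ↦ funext fun u ↦ ?_
  rw [smul_mulVec, dotProduct_smul, smul_eq_zero_iff_right hcoef.ne',
    dotProduct_lapMat_mulVec_eq_zero_iff hA hA₀] at hL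
  obtain ⟨i, hi⟩ := hVtr
  calc
    x u = x i := eq_of_preconnected_of_forall_adj_eq hG (fun v w h ↦ hL v w (hadj v w h)) u i
    _ = 0 := eq_zero_of_dotProduct_Stin_mulVec_eq_zero hS hi

theorem lapObj_eq_quadFun_add (Vtr : Finset (Fin n)) (lam : ℝ) (m : ℕ)
    (A : Matrix (Fin n) (Fin n) ℝ) (Yobs : Fin n → ℝ) :
    lapObj Vtr lam m A Yobs =
      quadFun (Bmat Vtr lam m A) (Stin Vtr *ᵥ Yobs) + fun _ ↦ Yobs ⬝ᵥ Stin Vtr *ᵥ Yobs := by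
  ext Y
  have hfit : (Vtr.card : ℝ)⁻¹ * ∑ i ∈ Vtr, (Y i - Yobs i) ^ 2 =
      Y ⬝ᵥ Stin Vtr *ᵥ Y - 2 * (Y ⬝ᵥ Stin Vtr *ᵥ Yobs) + Yobs ⬝ᵥ Stin Vtr *ᵥ Yobs := by
    have hsymm : (Stin Vtr).IsSymm := isHermitian_iff_isSymm.1 (posSemidef_Stin Vtr).isHermitian
    rw [← sub_dotProduct_mulVec_sub_of_isSymm hsymm, dotProduct_Stin_mulVec]
    simp only [Pi.sub_apply, sq]
  rw [lapObj, hfit, Pi.add_apply, quadFun, Bmat, add_mulVec, dotProduct_add, smul_mulVec,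
    dotProduct_smul, smul_eq_mul]
  ring

end Objective

theorem laplacian_objective_strictConvex_unique_minimizer
    {n : ℕ} (G : SimpleGraph (Fin n)) (A : Matrix (Fin n) (Fin n) ℝ)
    (hconn : G.Connected)
    (hsupp : ∀ u v, ¬ G.Adj u v → A u v = 0)
    (hpos : ∀ u v, G.Adj u v → 0 < A u v)
    (hsymm : A.IsSymm)
    (m : ℕ) (hmeq : m = G.edgeSet.ncard) (hm : 0 < m)
    (Vtr : Finset (Fin n)) (hVtr : Vtr.Nonempty)
    (lam : ℝ) (hlam : 0 < lam)
    (Yobs : Fin n → ℝ) :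
    StrictConvexOn ℝ Set.univ (lapObj Vtr lam m A Yobs) ∧
    ∀ Y : Fin n → ℝ,
      Y ≠ (Bmat Vtr lam m A)⁻¹.mulVec ((Stin Vtr).mulVec Yobs) →
      lapObj Vtr lam m A Yobs ((Bmat Vtr lam m A)⁻¹.mulVec ((Stin Vtr).mulVec Yobs)) <
        lapObj Vtr lam m A Yobs Y := by
  have hnonneg (u v : Fin n) : 0 ≤ A u v := by
    by_cases huv : G.Adj u v
    · exact (hpos u v huv).le
    · exact (hsupp u v huv).ge
  have hB : (Bmat Vtr lam m A).PosDef :=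
    posDef_Bmat hconn.preconnected hsymm hnonneg (fun u v huv ↦ (hpos u v huv).ne') hVtr
      (by positivity)
  rw [lapObj_eq_quadFun_add]
  exact ⟨(strictConvexOn_quadFun hB _).add_const _,
    fun Y hY ↦ add_lt_add_left (quadFun_inv_mulVec_lt hB hY) _⟩
end

section
/- Assume G is connected, let Y_obs ∈ ℝ^n, let μ_max be the largest eigenvalue of B, B̃ = B/μ_max, and T_r = (I − B̃)^r μ_max^{-1} S̃_in Y_obs. If a node u satisfies dist_G(u,v) > r for every v ∈ V_tr, then (T_r)_u = 0. -/
/-!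
By the triangle inequality, the number of hops over which a matrix couples nodes (its propagation)
is subadditive under multiplication. Since `I - B̃` is a diagonal matrix plus a multiple of `A`, it
has propagation at most `1`, so its `r`-th power only reads the values of `S̃_in Y_obs`, which is
supported on `V_tr`, within `r` hops.
-/

/-! STATEMENT 12: the Neumann series term `T_r` vanishes at nodes `u` that are more
than `r` hops from every node of `V_tr`. -/

open scoped BigOperators Matrix

/-- `T_r = (I - B̃)^r μmax⁻¹ S̃_in Y_obs`, the `r`-th term of the Neumann series of
`Y(A) = B⁻¹ S̃_in Y_obs`, where `B̃ = B/μmax`. -/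
noncomputable def Tvec {n : ℕ} (Vtr : Finset (Fin n)) (lam : ℝ) (m : ℕ)
    (A : Matrix (Fin n) (Fin n) ℝ) (μmax : ℝ) (Yobs : Fin n → ℝ) (r : ℕ) :
    Fin n → ℝ :=
  ((1 - μmax⁻¹ • Bmat Vtr lam m A) ^ r).mulVec (μmax⁻¹ • (Stin Vtr).mulVec Yobs)

/-- The matrix `M`, indexed by the nodes of `G`, has propagation at most `k`: its entries vanish at
pairs of nodes more than `k` hops apart. The bound lives in `ℕ∞`, like `SimpleGraph.edist`, which
is `⊤` between different components. -/
def PropagationLE {V R : Type*} [Zero R] (G : SimpleGraph V) (k : ℕ∞) (M : Matrix V V R) : Prop :=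
  ∀ ⦃u v⦄, k < G.edist u v → M u v = 0

namespace PropagationLE

variable {V R : Type*} {G : SimpleGraph V} {k l : ℕ∞} {M N : Matrix V V R}

theorem mono [Zero R] (hM : PropagationLE G k M) (hkl : k ≤ l) : PropagationLE G l M :=
  fun _ _ h => hM (hkl.trans_lt h)

theorem diagonal [DecidableEq V] [Zero R] (d : V → R) :
    PropagationLE G 0 (Matrix.diagonal d) :=
  fun _ _ h => Matrix.diagonal_apply_ne d (mt SimpleGraph.edist_eq_zero_iff.mpr h.ne')

theorem one [DecidableEq V] [Zero R] [One R] : PropagationLE G 0 (1 : Matrix V V R) :=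
  diagonal 1

theorem of_forall_not_adj [Zero R] (hM : ∀ u v, ¬ G.Adj u v → M u v = 0) :
    PropagationLE G 1 M :=
  fun u v h => hM u v fun hadj => h.ne' (SimpleGraph.edist_eq_one_iff_adj.mpr hadj)

theorem add [AddZeroClass R] (hM : PropagationLE G k M) (hN : PropagationLE G k N) :
    PropagationLE G k (M + N) :=
  fun _ _ h => by rw [Matrix.add_apply, hM h, hN h, add_zero]

theorem sub [SubNegZeroMonoid R] (hM : PropagationLE G k M) (hN : PropagationLE G k N) :
    PropagationLE G k (M - N) :=
  fun _ _ h => by rw [Matrix.sub_apply, hM h, hN h, sub_zero]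

theorem const_smul {S : Type*} [Zero R] [SMulZeroClass S R] (hM : PropagationLE G k M) (c : S) :
    PropagationLE G k (c • M) :=
  fun _ _ h => by rw [Matrix.smul_apply, hM h, smul_zero]

theorem mul [Fintype V] [NonUnitalNonAssocSemiring R]
    (hM : PropagationLE G k M) (hN : PropagationLE G l N) : PropagationLE G (k + l) (M * N) := by
  intro u w huw
  rw [Matrix.mul_apply]
  refine Finset.sum_eq_zero fun v _ => ?_
  have hfar : k < G.edist u v ∨ l < G.edist v w := by
    by_contra! hnear
    exact huw.not_ge (G.edist_triangle.trans (add_le_add hnear.1 hnear.2))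
  rcases hfar with huv | hvw
  · rw [hM huv, zero_mul]
  · rw [hN hvw, mul_zero]

theorem pow [Fintype V] [DecidableEq V] [Semiring R] (hM : PropagationLE G k M) (r : ℕ) :
    PropagationLE G (r • k) (M ^ r) := by
  induction r with
  | zero => simpa only [zero_nsmul, pow_zero] using one
  | succ r ih => simpa only [succ_nsmul, pow_succ] using ih.mul hM

theorem mulVec_apply_eq_zero [Fintype V] [NonUnitalNonAssocSemiring R]
    (hM : PropagationLE G k M) {x : V → R} {u : V} (hu : ∀ v, x v ≠ 0 → k < G.edist u v) :
    (M *ᵥ x) u = 0 := by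
  rw [Matrix.mulVec_apply]
  refine Finset.sum_eq_zero fun v _ => ?_
  by_cases hxv : x v = 0
  · rw [hxv, mul_zero]
  · rw [Matrix.row_apply, hM (hu v hxv), zero_mul]

end PropagationLE

/-- Here `c`, `s`, `lam` and `d` play the roles of `μmax⁻¹`, the diagonal of `S̃_in`, `λ / m` and
the degrees, and the support of `s` that of `V_tr`. -/
theorem neumann_term_eq_zero_of_far_from_Vtr_general {V R : Type*} [Fintype V] [DecidableEq V]
    [Ring R] (G : SimpleGraph V) (A : Matrix V V R) (hsupp : ∀ u v, ¬ G.Adj u v → A u v = 0)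
    (s d : V → R) (c lam : R) (y : V → R) (r : ℕ) (u : V)
    (hu : ∀ v, s v ≠ 0 → (r : ℕ∞) < G.edist u v) :
    ((1 - c • (Matrix.diagonal s + lam • (Matrix.diagonal d - A))) ^ r *ᵥ
      (c • Matrix.diagonal s *ᵥ y)) u = 0 := by
  have hdiag (e : V → R) : PropagationLE G 1 (Matrix.diagonal e) :=
    (PropagationLE.diagonal e).mono zero_le_one
  have hlap : PropagationLE G 1 (Matrix.diagonal d - A) :=
    (hdiag d).sub (.of_forall_not_adj hsupp)
  have hstep : PropagationLE G 1 (1 - c • (Matrix.diagonal s + lam • (Matrix.diagonal d - A))) :=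
    (PropagationLE.one.mono zero_le_one).sub (((hdiag s).add (hlap.const_smul lam)).const_smul c)
  refine (hstep.pow r).mulVec_apply_eq_zero fun v hv => ?_
  have hsv : s v ≠ 0 := by
    contrapose! hv
    rw [Pi.smul_apply, Matrix.mulVec_diagonal, hv, zero_mul, smul_zero]
  simpa only [nsmul_one] using hu v hsv

theorem neumann_term_eq_zero_of_far_from_Vtr
    {n : ℕ} (G : SimpleGraph (Fin n)) (A : Matrix (Fin n) (Fin n) ℝ)
    (hconn : G.Connected)
    (hsupp : ∀ u v, ¬ G.Adj u v → A u v = 0)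
    (hpos : ∀ u v, G.Adj u v → 0 < A u v)
    (hsymm : A.IsSymm)
    (m : ℕ) (hmeq : m = G.edgeSet.ncard) (hm : 0 < m)
    (Vtr : Finset (Fin n)) (hVtr : Vtr.Nonempty)
    (lam : ℝ) (hlam : 0 < lam)
    (μmax : ℝ)
    (hmax_mem : ∃ x : Fin n → ℝ, x ≠ 0 ∧ (Bmat Vtr lam m A).mulVec x = μmax • x)
    (hmax_ge : ∀ (μ : ℝ) (x : Fin n → ℝ), x ≠ 0 →
      (Bmat Vtr lam m A).mulVec x = μ • x → μ ≤ μmax)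
    (Yobs : Fin n → ℝ) :
    ∀ (r : ℕ) (u : Fin n), (∀ v ∈ Vtr, (r : ℕ∞) < G.edist u v) →
      Tvec Vtr lam m A μmax Yobs r u = 0 := by
  intro r u hu
  simp only [Tvec, Bmat, Stin, selMat, lapMat, ← Matrix.diagonal_smul]
  exact neumann_term_eq_zero_of_far_from_Vtr_general G A hsupp _ _ _ _ Yobs r u
    fun v hv => hu v (by_contra fun hmem => hv (by simp [hmem]))
end

section
/- Assume G is connected, let Y_obs ∈ ℝ^n, and fix positive constants m (the edge count of G) and μ_max ≥ the largest eigenvalue of B(A) = S̃_in + (λ/m) L(A). For a symmetric matrix variable A, define T_r(A) = (I − B(A)/μ_max)^r μ_max^{-1} S̃_in Y_obs, and consider the derivative of (T_r(A))_u along the symmetric perturbation of the single entry pair (A_{ij}, A_{ji}) (with μ_max and m held fixed). Then ∂(T_r)_u/∂A_{ij} = −(λ/(m μ_max)) Σ_{h=1}^{r} [ ((I−B̃)^{r−h})_{ui} (T_{h−1})_i + ((I−B̃)^{r−h})_{uj} (T_{h−1})_j − ((I−B̃)^{r−h})_{uj} (T_{h−1})_i − ((I−B̃)^{r−h})_{ui}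 (T_{h−1})_j ], where B̃ = B(A)/μ_max. -/
/-! STATEMENT 14: exact formula for the derivative of the Neumann series term `(T_r)_u`
along the symmetric perturbation of the entry pair `(A i j, A j i)`, with `m` and
`μmax` held fixed. -/

open scoped BigOperators Matrix

/-- Symmetric perturbation of the entry pair `(A i j, A j i)` of `A` to the value `θ`. -/
noncomputable def pert {n : ℕ} (A : Matrix (Fin n) (Fin n) ℝ) (i j : Fin n) (θ : ℝ) :
    Matrix (Fin n) (Fin n) ℝ :=
  Matrix.of fun s t => if (s = i ∧ t = j) ∨ (s = j ∧ t = i) then θ else A s t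

/-!
Varying the weight of a single edge moves the Laplacian along a line, so `I - B̃` is an affine
function of that weight, with velocity a multiple of `E_ii + E_jj - E_ij - E_ji`. The derivative
of the `r`-th power of a path `N` in a noncommutative ring is `∑_{h < r} N ^ (r - 1 - h) N' N ^ h`,
and applying each summand to the vector turns every matrix unit of `N'` into one of the four terms
of the formula.
-/

section MatrixCalculus

-- The norm only serves the proofs: `HasDerivAt` on matrices refers to the entrywise topology.
open scoped Matrix.Norms.Operator

variable {𝕜 R ι : Type*} [NontriviallyNormedField 𝕜] [NormedRing R] [NormedAlgebra 𝕜 R]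
  [Fintype ι] {x : 𝕜}

lemma hasDerivAt_mulVec {κ : Type*} [Finite κ] {N : 𝕜 → Matrix κ ι R} {N' : Matrix κ ι R}
    (hN : HasDerivAt N N' x) (v : ι → R) : HasDerivAt (fun t => N t *ᵥ v) (N' *ᵥ v) x := by
  have := Fintype.ofFinite κ
  exact hasDerivAt_pi.2 fun u => HasDerivAt.fun_sum fun w _ =>
    (hasDerivAt_pi.1 (hasDerivAt_pi.1 hN u) w).mul_const (v w)

lemma hasDerivAt_pow_mulVec [DecidableEq ι] {N : 𝕜 → Matrix ι ι R} {N' : Matrix ι ι R}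
    (hN : HasDerivAt N N' x) (v : ι → R) (r : ℕ) :
    HasDerivAt (fun t => (N t ^ r) *ᵥ v)
      (∑ h ∈ Finset.range r, N x ^ (r - 1 - h) *ᵥ (N' *ᵥ (N x ^ h *ᵥ v))) x := by
  simpa only [Matrix.sum_mulVec, ← Matrix.mulVec_mulVec, Nat.pred_eq_sub_one] using
    hasDerivAt_mulVec (hN.fun_pow' r) v

end MatrixCalculus

section EdgeLaplacian

open scoped Matrix.Norms.Operator

/-- The Laplacian `E_ii + E_jj - E_ij - E_ji` of a single unit-weight edge between `i` and `j`,
which is the direction in which `lapMat` moves when the weight of that edge varies. It is zero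
when `i = j`. -/
def edgeLap {ι : Type*} (R : Type*) [DecidableEq ι] [Ring R] (i j : ι) : Matrix ι ι R :=
  Matrix.single i i 1 + Matrix.single j j 1 - Matrix.single i j 1 - Matrix.single j i 1

variable {ι R : Type*} [Fintype ι] [DecidableEq ι]

lemma edgeLap_mulVec [Ring R] (i j : ι) (w : ι → R) :
    edgeLap R i j *ᵥ w = Pi.single i (w i - w j) - Pi.single j (w i - w j) := by
  simp only [edgeLap, Matrix.sub_mulVec, Matrix.add_mulVec, Matrix.single_mulVec_eq, one_mul,
    ← Pi.single_smul, smul_eq_mul, mul_one, Pi.single_sub]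
  abel

lemma mulVec_edgeLap_mulVec_apply [Ring R] (P : Matrix ι ι R) (w : ι → R) (i j u : ι) :
    (P *ᵥ (edgeLap R i j *ᵥ w)) u = P u i * w i + P u j * w j - P u j * w i - P u i * w j := by
  simp only [edgeLap_mulVec, Matrix.mulVec_sub, Matrix.mulVec_single, Pi.sub_apply, Pi.smul_apply,
    Matrix.col_apply, MulOpposite.smul_eq_mul_unop, MulOpposite.unop_op]
  noncomm_ring

lemma hasDerivAt_pow_mulVec_apply_of_edgeLap {𝕜 : Type*} [NontriviallyNormedField 𝕜]
    [NormedRing R] [NormedAlgebra 𝕜 R] {N : 𝕜 → Matrix ι ι R} {κ x : 𝕜} {i j : ι}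
    (hN : HasDerivAt N (κ • edgeLap R i j) x) (v : ι → R) (u : ι) (r : ℕ) :
    HasDerivAt (fun t => (N t ^ r *ᵥ v) u)
      (κ • ∑ h ∈ Finset.range r,
        ((N x ^ (r - 1 - h)) u i * (N x ^ h *ᵥ v) i + (N x ^ (r - 1 - h)) u j * (N x ^ h *ᵥ v) j
          - (N x ^ (r - 1 - h)) u j * (N x ^ h *ᵥ v) i
          - (N x ^ (r - 1 - h)) u i * (N x ^ h *ᵥ v) j)) x := by
  simpa only [Finset.sum_apply, Matrix.smul_mulVec, Matrix.mulVec_smul, Pi.smul_apply,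
    mulVec_edgeLap_mulVec_apply, ← Finset.smul_sum] using
    hasDerivAt_pi.1 (hasDerivAt_pow_mulVec hN v r) u

end EdgeLaplacian

section Perturbation

open scoped Matrix.Norms.Operator

variable {n : ℕ}

lemma lapMat_add (A B : Matrix (Fin n) (Fin n) ℝ) : lapMat (A + B) = lapMat A + lapMat B := by
  simp only [lapMat, Matrix.add_apply, Finset.sum_add_distrib, ← Matrix.diagonal_add]
  abel

lemma lapMat_smul (c : ℝ) (A : Matrix (Fin n) (Fin n) ℝ) : lapMat (c • A) = c • lapMat A := by
  simp only [lapMat, smul_sub, Matrix.smul_apply, ← Finset.smul_sum]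
  rw [← Matrix.diagonal_smul, Pi.smul_def]

lemma lapMat_single (i j : Fin n) (c : ℝ) :
    lapMat (Matrix.single i j c) = Matrix.single i i c - Matrix.single i j c := by
  have hdeg (s : Fin n) : ∑ t, Matrix.single i j c s t = Pi.single (M := fun _ => ℝ) i c s := by
    by_cases h : s = i <;> simp [Matrix.single_apply, h, Ne.symm]
  simp only [lapMat, hdeg, Matrix.diagonal_single]

lemma pert_self {A : Matrix (Fin n) (Fin n) ℝ} (hA : A.IsSymm) (i j : Fin n) :
    pert A i j (A i j) = A := by
  ext s t
  simp only [pert, Matrix.of_apply, ite_eq_right_iff]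
  rintro (⟨rfl, rfl⟩ | ⟨rfl, rfl⟩)
  exacts [rfl, hA.apply s t]

lemma pert_eq_add_smul (A : Matrix (Fin n) (Fin n) ℝ) (i j : Fin n) (θ : ℝ) :
    pert A i j θ = pert A i j 0 + θ • pert 0 i j 1 := by
  ext s t
  simp only [pert, Matrix.add_apply, Matrix.smul_apply, Matrix.of_apply]
  split_ifs <;> simp

lemma pert_zero_one_self (i : Fin n) : pert 0 i i 1 = Matrix.single i i 1 := by
  ext s t
  simp [pert, Matrix.single_apply, eq_comm]

lemma pert_zero_one_of_ne {i j : Fin n} (hij : i ≠ j) :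
    pert 0 i j 1 = Matrix.single i j 1 + Matrix.single j i 1 := by
  ext s t
  simp only [pert, Matrix.of_apply, Matrix.add_apply, Matrix.single_apply, Matrix.zero_apply]
  grind

lemma lapMat_pert_zero_one (i j : Fin n) : lapMat (pert 0 i j 1) = edgeLap ℝ i j := by
  obtain rfl | hij := eq_or_ne i j
  · simp [pert_zero_one_self, lapMat_single, edgeLap]
  · rw [pert_zero_one_of_ne hij, lapMat_add, lapMat_single, lapMat_single, edgeLap]
    abel

lemma lapMat_pert (A : Matrix (Fin n) (Fin n) ℝ) (i j : Fin n) (θ : ℝ) :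
    lapMat (pert A i j θ) = lapMat (pert A i j 0) + θ • edgeLap ℝ i j := by
  rw [pert_eq_add_smul, lapMat_add, lapMat_smul, lapMat_pert_zero_one]

lemma hasDerivAt_lapMat_pert (A : Matrix (Fin n) (Fin n) ℝ) (i j : Fin n) (θ : ℝ) :
    HasDerivAt (fun t => lapMat (pert A i j t)) (edgeLap ℝ i j) θ := by
  rw [funext (lapMat_pert A i j)]
  exact (((hasDerivAt_id θ).smul_const _).const_add _).congr_deriv (one_smul ℝ _)

lemma one_sub_inv_smul_Bmat (Vtr : Finset (Fin n)) (lam : ℝ) (m : ℕ) (μ : ℝ)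
    (A : Matrix (Fin n) (Fin n) ℝ) :
    1 - μ⁻¹ • Bmat Vtr lam m A = (1 - μ⁻¹ • Stin Vtr) + (-(lam / (m * μ))) • lapMat A := by
  rw [Bmat, smul_add, smul_smul, inv_mul_eq_div, div_div, neg_smul]
  abel

theorem neumann_term_deriv_formula_general (A M : Matrix (Fin n) (Fin n) ℝ) (κ : ℝ)
    (i j : Fin n) {N : ℝ → Matrix (Fin n) (Fin n) ℝ}
    (hN : ∀ θ, N θ = M + κ • lapMat (pert A i j θ)) (v : Fin n → ℝ) (u : Fin n) (r : ℕ) (θ₀ : ℝ) :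
    HasDerivAt (fun θ => (N θ ^ r *ᵥ v) u)
      (κ * ∑ h ∈ Finset.range r,
        ((N θ₀ ^ (r - 1 - h)) u i * (N θ₀ ^ h *ᵥ v) i
          + (N θ₀ ^ (r - 1 - h)) u j * (N θ₀ ^ h *ᵥ v) j
          - (N θ₀ ^ (r - 1 - h)) u j * (N θ₀ ^ h *ᵥ v) i
          - (N θ₀ ^ (r - 1 - h)) u i * (N θ₀ ^ h *ᵥ v) j)) θ₀ := by
  obtain rfl := funext hN
  exact hasDerivAt_pow_mulVec_apply_of_edgeLap
    (((hasDerivAt_lapMat_pert A i j θ₀).fun_const_smul κ).const_add M) v u r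

end Perturbation

theorem neumann_term_deriv_formula
    {n : ℕ} (G : SimpleGraph (Fin n)) (A : Matrix (Fin n) (Fin n) ℝ)
    (hconn : G.Connected)
    (hsupp : ∀ u v, ¬ G.Adj u v → A u v = 0)
    (hpos : ∀ u v, G.Adj u v → 0 < A u v)
    (hsymm : A.IsSymm)
    (m : ℕ) (hmeq : m = G.edgeSet.ncard) (hm : 0 < m)
    (Vtr : Finset (Fin n)) (hVtr : Vtr.Nonempty)
    (lam : ℝ) (hlam : 0 < lam)
    (μmax : ℝ)
    (hmax_mem : ∃ x : Fin n → ℝ, x ≠ 0 ∧ (Bmat Vtr lam m A).mulVec x = μmax • x)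
    (hmax_ge : ∀ (μ : ℝ) (x : Fin n → ℝ), x ≠ 0 →
      (Bmat Vtr lam m A).mulVec x = μ • x → μ ≤ μmax)
    (hμmax_pos : 0 < μmax)
    (Yobs : Fin n → ℝ) (i j u : Fin n) (r : ℕ) :
    HasDerivAt
      (fun θ : ℝ => Tvec Vtr lam m (pert A i j θ) μmax Yobs r u)
      (-(lam / (m * μmax)) * ∑ h ∈ Finset.range r,
        (((1 - μmax⁻¹ • Bmat Vtr lam m A) ^ (r - 1 - h)) u i * Tvec Vtr lam m A μmax Yobs h i
          + ((1 - μmax⁻¹ • Bmat Vtr lam m A) ^ (r - 1 - h)) u j * Tvec Vtr lam m A μmax Yobs h j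
          - ((1 - μmax⁻¹ • Bmat Vtr lam m A) ^ (r - 1 - h)) u j * Tvec Vtr lam m A μmax Yobs h i
          - ((1 - μmax⁻¹ • Bmat Vtr lam m A) ^ (r - 1 - h)) u i * Tvec Vtr lam m A μmax Yobs h j))
      (A i j) := by
  simpa only [pert_self hsymm] using! neumann_term_deriv_formula_general A _ _ i j
    (fun θ => one_sub_inv_smul_Bmat Vtr lam m μmax (pert A i j θ))
    (μmax⁻¹ • (Stin Vtr).mulVec Yobs) u r (A i j)
end
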